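/- Fix μ ∈ ℝ^n. Suppose T is a symmetric k-tensor on ℝ^n (invariant under permuting its k arguments) such that T^{i₁…i_k} = 0 for every multi-index (i₁,…,i_k) with pairwise distinct entries. Then Σ_{σ ∈ P^k} Σ_{l=1}^{k} sign(σ_{(l)}) · Diag^{σ_{(l)}} T^{(l)}_out = 0, where the outer sum is over all permutations σ on {1,…,k}. -/

import Mathlib

open scoped BigOperators
open Filter Asymptotics Matrix

attribute [local instance] Matrix.normedAddCommGroup

noncomputable section

/-- A `k`-tensor on `ℝ^n`, identified with its array of entries. -/
abbrev Tensor (k n : ℕ) : Type := (Fin k → Fin n) → ℝ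

/-- A `2k`-tensor on `ℝ^n`, with its indices grouped into two groups of `k`. -/
abbrev Tensor2 (k n : ℕ) : Type := (Fin k → Fin n) → (Fin k → Fin n) → ℝ

/-- The `σ`-Hadamard product of `k` matrices:
`(H₁ ∘_σ ⋯ ∘_σ H_k)^{i₁…i_k} = ∏ s, H_s^{i_s i_{σ⁻¹(s)}}`. -/
def hadamardProd {k n : ℕ} (σ : Equiv.Perm (Fin k))
    (H : Fin k → Matrix (Fin n) (Fin n) ℝ) : Tensor k n :=
  fun i => ∏ s, H s (i s) (i (σ⁻¹ s))

/-- The dot product of two `k`-tensors. -/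
def tdot {k n : ℕ} (T₁ T₂ : Tensor k n) : ℝ :=
  ∑ p : Fin k → Fin n, T₁ p * T₂ p

/-- `Diag^σ T`, the `2k`-tensor equal to `T^{i₁…i_k}` when `i_s = j_{σ(s)}` for all `s`,
and `0` otherwise. -/
def diagPerm {k n : ℕ} (σ : Equiv.Perm (Fin k)) (T : Tensor k n) : Tensor2 k n :=
  fun i j => if ∀ s, i s = j (σ s) then T i else 0

/-- A `2k`-tensor viewed as a `k`-tensor on matrix arguments:
`S[H₁,…,H_k] = ∑_{p,q} S^{p₁…p_k}_{q₁…q_k} ∏ s, H_s^{p_s q_s}`. -/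
def apply2 {k n : ℕ} (S : Tensor2 k n)
    (H : Fin k → Matrix (Fin n) (Fin n) ℝ) : ℝ :=
  ∑ p : Fin k → Fin n, ∑ q : Fin k → Fin n, S p q * ∏ s, H s (p s) (q s)

/-- Conjugation `U S Uᵀ` of a `2k`-tensor `S` by a matrix `U`. -/
def conj2 {k n : ℕ} (U : Matrix (Fin n) (Fin n) ℝ) (S : Tensor2 k n) : Tensor2 k n :=
  fun i j => ∑ p : Fin k → Fin n, ∑ q : Fin k → Fin n,
    S p q * ((∏ s, U (i s) (p s)) * ∏ s, U (j s) (q s))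

/-- For a `2(k+1)`-tensor `S` viewed as a `(k+1)`-tensor on matrices, `S[H]` fixes the last
matrix argument to `H`, producing a `2k`-tensor. -/
def lastApply {k n : ℕ} (S : Tensor2 (k+1) n)
    (H : Matrix (Fin n) (Fin n) ℝ) : Tensor2 k n :=
  fun i j => ∑ a : Fin n, ∑ b : Fin n, S (Fin.snoc i a) (Fin.snoc j b) * H a b

/-- `T[x]`: contraction of the last index of a `(k+1)`-tensor against a vector. -/
def contract {k n : ℕ} (T : Tensor (k+1) n) (x : Fin n → ℝ) : Tensor k n :=
  fun i => ∑ a : Fin n, T (Fin.snoc i a) * x a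

/-- A permutation `σ` of `{1,…,k}` viewed as a permutation of `{1,…,k+1}` fixing `k+1`. -/
def extPerm {k : ℕ} (σ : Equiv.Perm (Fin k)) : Equiv.Perm (Fin (k+1)) :=
  (Equiv.permCongr finSuccEquivLast).symm σ.optionCongr

/-- `σ_{(l)} := σ ∘ τ_l`, where `τ_l` is the transposition `(l, k+1)` (and `σ` fixes `k+1`).
Here `l : Fin (k+1)`; taking `l = Fin.last k` gives `σ_{(k+1)} = σ`. -/
def permIns {k : ℕ} (σ : Equiv.Perm (Fin k)) (l : Fin (k+1)) : Equiv.Perm (Fin (k+1)) :=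
  extPerm σ * Equiv.swap l (Fin.last k)

/-- A tensor is `μ`-block-constant if its entries agree on componentwise `μ`-equivalent
multi-indices (`i ∼ j` iff `μ i = μ j`). -/
def BlockConstant {k n : ℕ} (μ : Fin n → ℝ) (T : Tensor k n) : Prop :=
  ∀ i j : Fin k → Fin n, (∀ s, μ (i s) = μ (j s)) → T i = T j

/-- `H_in`: the diagonal-block part of `H` (w.r.t. the blocks of `μ`). -/
def matIn {n : ℕ} (μ : Fin n → ℝ) (H : Matrix (Fin n) (Fin n) ℝ) :
    Matrix (Fin n) (Fin n) ℝ :=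
  Matrix.of fun i j => if μ i = μ j then H i j else 0

/-- `H_out = H - H_in`: the off-diagonal-block part of `H`. -/
def matOut {n : ℕ} (μ : Fin n → ℝ) (H : Matrix (Fin n) (Fin n) ℝ) :
    Matrix (Fin n) (Fin n) ℝ :=
  H - matIn μ H

/-- The divided-difference tensor `T^{(l)}_out` of a `k`-tensor `T`, a `(k+1)`-tensor. -/
def outDD {k n : ℕ} (μ : Fin n → ℝ) (T : Tensor k n) (l : Fin k) : Tensor (k+1) n :=
  fun i => if μ (i l.castSucc) = μ (i (Fin.last k)) then 0
    else (T (Function.update (fun s => i s.castSucc) l (i (Fin.last k)))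
          - T (fun s => i s.castSucc)) / (μ (i (Fin.last k)) - μ (i l.castSucc))

/-- `T^{τ_l}`: the `(k+1)`-tensor equal to `T^{i₁…i_k}` on the hyperplane `i_l = i_{k+1}`
and `0` elsewhere. -/
def liftTau {k n : ℕ} (T : Tensor k n) (l : Fin k) : Tensor (k+1) n :=
  fun i => if i l.castSucc = i (Fin.last k) then T (fun s => i s.castSucc) else 0

/-- `T^{τ_l}_in`: the "inflated" `(k+1)`-tensor, equal to
`T^{i₁…i_{l-1} i_{k+1} i_{l+1}…i_k}` when `μ_{i_l} = μ_{i_{k+1}}` and `0` otherwise. -/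
def liftTauIn {k n : ℕ} (μ : Fin n → ℝ) (T : Tensor k n) (l : Fin k) : Tensor (k+1) n :=
  fun i => if μ (i l.castSucc) = μ (i (Fin.last k))
    then T (Function.update (fun s => i s.castSucc) l (i (Fin.last k))) else 0

/-- `lam` is the map sending each symmetric matrix to the vector of its eigenvalues
ordered nonincreasingly: it is nonincreasing and realized by an orthogonal
diagonalization. -/
def IsEigCF {n : ℕ} (lam : Matrix (Fin n) (Fin n) ℝ → Fin n → ℝ) : Prop :=
  ∀ A : Matrix (Fin n) (Fin n) ℝ, A.IsSymm →
    Antitone (lam A) ∧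
    ∃ U : Matrix (Fin n) (Fin n) ℝ, Uᵀ * U = 1 ∧
      A = U * Matrix.diagonal (lam A) * Uᵀ

/-- `h` is the concatenated vector `(λ(X₁ᵀ A X₁), …, λ(X_rᵀ A X_r))` of the nonincreasingly
ordered eigenvalues of the diagonal blocks of `A` (blocks determined by `μ`):
equivalently, `h` is nonincreasing within each block of `μ` and `Diag h` is obtained from
`A_in` by conjugating with a block-diagonal orthogonal matrix. -/
def IsBlockEig {n : ℕ} (μ : Fin n → ℝ) (A : Matrix (Fin n) (Fin n) ℝ)
    (h : Fin n → ℝ) : Prop :=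
  (∀ i j : Fin n, i ≤ j → μ i = μ j → h j ≤ h i) ∧
  ∃ V : Matrix (Fin n) (Fin n) ℝ, Vᵀ * V = 1 ∧
    (∀ i j, μ i ≠ μ j → V i j = 0) ∧
    Vᵀ * matIn μ A * V = Matrix.diagonal h

/-! Every permutation `ν` of `k + 1` positions is `σ_{(l)}` for exactly one `σ` and one
`l ≤ k + 1`, namely `l = ν⁻¹ (k + 1)`. With the convention `T^{(k+1)}_out = 0`, the `(i, j)` entry
of the sum thus runs over all `ν` that match `i` with `j`, each weighted by `sign ν` and by
`T^{(l)}_out` at `i`: it is the determinant of the coincidence matrix of `i` and `j` with its last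
row reweighted. A repetition in `i` produces two equal columns, by the symmetry of `T`; without
repetitions the weights, and with them the last row, vanish. -/

section CoincidenceMatrix

variable {k : ℕ} {α R : Type*} [DecidableEq α]

/-- The coincidence matrix of two multi-indices `i` and `j`, whose `(t, s)` entry tells whether
`i s = j t`, with its last row weighted by `g`. Rows are indexed by positions of `j`, so that the
permutation `ν` contributes `∏ s, M (ν s) s` to the determinant. -/
def weightedCoincidence [Zero R] [One R] (g : Fin (k + 1) → R) (i j : Fin (k + 1) → α) :
    Matrix (Fin (k + 1)) (Fin (k + 1)) R :=
  Matrix.of fun t s => if i s = j t then (if t = Fin.last k then g s else 1) else 0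

lemma prod_weightedCoincidence [CommMonoidWithZero R] (g : Fin (k + 1) → R) (i j : Fin (k + 1) → α)
    {ν : Equiv.Perm (Fin (k + 1))} {l : Fin (k + 1)} (hl : ν l = Fin.last k) :
    ∏ s, weightedCoincidence g i j (ν s) s = if ∀ s, i s = j (ν s) then g l else 0 := by
  have eq_last_iff (s : Fin (k + 1)) : ν s = Fin.last k ↔ s = l := by
    rw [← hl, ν.apply_eq_iff_eq]
  simp only [weightedCoincidence, Matrix.of_apply, Finset.prod_ite_zero, Finset.mem_univ,
    true_imp_iff, eq_last_iff, Finset.prod_ite_eq', if_true]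

lemma det_weightedCoincidence_zero [CommRing R] (i j : Fin (k + 1) → α) :
    (weightedCoincidence (0 : Fin (k + 1) → R) i j).det = 0 :=
  Matrix.det_eq_zero_of_row_eq_zero (Fin.last k) fun s => by simp [weightedCoincidence]

lemma det_weightedCoincidence_of_eq [CommRing R] {g : Fin (k + 1) → R} {i : Fin (k + 1) → α}
    {a b : Fin (k + 1)} (hab : a ≠ b) (hi : i a = i b) (hg : g a = g b) (j : Fin (k + 1) → α) :
    (weightedCoincidence g i j).det = 0 :=
  Matrix.det_zero_of_column_eq hab fun t => by
    simp only [weightedCoincidence, Matrix.of_apply, hi, hg]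

end CoincidenceMatrix

section PermIns

variable {k : ℕ}

lemma extPerm_last (σ : Equiv.Perm (Fin k)) : extPerm σ (Fin.last k) = Fin.last k := by
  simp [extPerm, Equiv.permCongr]

lemma extPerm_injective : Function.Injective (extPerm (k := k)) :=
  (Equiv.permCongr finSuccEquivLast).symm.injective.comp Equiv.optionCongr_injective

lemma permIns_apply_self (σ : Equiv.Perm (Fin k)) (l : Fin (k + 1)) :
    permIns σ l l = Fin.last k := by
  rw [permIns, Equiv.Perm.mul_apply, Equiv.swap_apply_left, extPerm_last]

lemma permIns_bijective : Function.Bijective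
    fun x : Equiv.Perm (Fin k) × Fin (k + 1) => permIns x.1 x.2 := by
  rw [Fintype.bijective_iff_injective_and_card]
  constructor
  · rintro ⟨σ, l⟩ ⟨σ', l'⟩ (h : permIns σ l = permIns σ' l')
    obtain rfl : l = l' := (permIns σ l).injective <| by
      rw [permIns_apply_self, h, permIns_apply_self]
    obtain rfl : σ = σ' := extPerm_injective (mul_right_cancel h)
    rfl
  · simp [Fintype.card_perm, Nat.factorial_succ, mul_comm]

lemma sum_permIns {M : Type*} [AddCommMonoid M] (f : Equiv.Perm (Fin (k + 1)) → M) :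
    ∑ σ : Equiv.Perm (Fin k), ∑ l, f (permIns σ l) = ∑ ν, f ν := by
  rw [← Fintype.sum_prod_type']
  exact permIns_bijective.sum_comp f

lemma det_weightedCoincidence {α R : Type*} [DecidableEq α] [CommRing R]
    (g : Fin (k + 1) → R) (i j : Fin (k + 1) → α) :
    (weightedCoincidence g i j).det = ∑ σ : Equiv.Perm (Fin k), ∑ l,
      (Equiv.Perm.sign (permIns σ l) : ℤ) •
        (if ∀ s, i s = j (permIns σ l s) then g l else 0) := by
  simp only [Matrix.det_apply', ← sum_permIns (k := k), zsmul_eq_mul,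
    prod_weightedCoincidence g i j (permIns_apply_self _ _)]

/-- The values at `i` of tensors `S l` attached to the first `k` positions, extended by `0` to the
last one. For `S l = T^{(l)}_out` this amounts to the convention `T^{(k+1)}_out = 0`, in accordance
with `T^{(l)}_out` vanishing where `i_l = i_{k+1}`. -/
def positionWeights {n : ℕ} (S : Fin k → Tensor (k + 1) n) (i : Fin (k + 1) → Fin n) :
    Fin (k + 1) → ℝ :=
  Fin.snoc (fun l => S l i) 0

lemma sum_sign_smul_diagPerm_permIns_apply {n : ℕ} (S : Fin k → Tensor (k + 1) n)
    (i j : Fin (k + 1) → Fin n) :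
    (∑ σ : Equiv.Perm (Fin k), ∑ l : Fin k, (Equiv.Perm.sign (permIns σ l.castSucc) : ℤ) •
        diagPerm (permIns σ l.castSucc) (S l)) i j =
      (weightedCoincidence (positionWeights S i) i j).det := by
  simp only [det_weightedCoincidence, positionWeights, Fin.sum_univ_castSucc, Fin.snoc_castSucc,
    Fin.snoc_last, ite_self, smul_zero, add_zero, Finset.sum_apply, Pi.smul_apply, diagPerm]

end PermIns

section Update

variable {ι α : Type*} [DecidableEq ι]

lemma comp_swap_of_eq {f : ι → α} {a b : ι} (h : f a = f b) : f ∘ Equiv.swap a b = f := by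
  rw [Equiv.comp_swap_eq_update, h, Function.update_eq_self, ← h, Function.update_eq_self]

lemma update_eq_update_comp_swap {f : ι → α} {a b : ι} (h : f a = f b) (c : α) :
    Function.update f a c = Function.update f b c ∘ Equiv.swap a b := by
  rw [Function.update_comp_equiv, comp_swap_of_eq h, Equiv.symm_swap, Equiv.swap_apply_right]

lemma injective_update_of_notMem_range {f : ι → α} {c : α} (hf : Function.Injective f)
    (hc : c ∉ Set.range f) (a : ι) : Function.Injective (Function.update f a c) := by
  have ne_apply (s : ι) : c ≠ f s := fun h => hc ⟨s, h.symm⟩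
  intro s t hst
  simp only [Function.update_apply] at hst
  split_ifs at hst with hs ht ht
  · rw [hs, ht]
  · exact absurd hst (ne_apply t)
  · exact absurd hst.symm (ne_apply s)
  · exact hf hst

end Update

section OutDD

variable {k n : ℕ} (μ : Fin n → ℝ) {T : Tensor k n} {i : Fin (k + 1) → Fin n}

lemma outDD_of_eq_last (T : Tensor k n) {l : Fin k}
    (h : μ (i l.castSucc) = μ (i (Fin.last k))) : outDD μ T l i = 0 :=
  if_pos h

lemma outDD_eq_of_eq (hsymm : ∀ (π : Equiv.Perm (Fin k)) (p : Fin k → Fin n), T (p ∘ π) = T p)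
    {a b : Fin k} (h : i a.castSucc = i b.castSucc) : outDD μ T a i = outDD μ T b i := by
  have update_eq : T (Function.update (fun s => i s.castSucc) a (i (Fin.last k))) =
      T (Function.update (fun s => i s.castSucc) b (i (Fin.last k))) := by
    rw [update_eq_update_comp_swap (f := fun s : Fin k => i s.castSucc) h, hsymm]
  simp only [outDD, h, update_eq]

lemma positionWeights_outDD_eq_of_eq
    (hsymm : ∀ (π : Equiv.Perm (Fin k)) (p : Fin k → Fin n), T (p ∘ π) = T p)
    {a b : Fin (k + 1)} (h : i a = i b) :
    positionWeights (outDD μ T) i a = positionWeights (outDD μ T) i b := by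
  cases a using Fin.lastCases <;> cases b using Fin.lastCases <;>
    simp only [positionWeights, Fin.snoc_castSucc, Fin.snoc_last]
  case last.cast b => exact (outDD_of_eq_last μ T (congrArg μ h.symm)).symm
  case cast.last a => exact outDD_of_eq_last μ T (congrArg μ h)
  case cast.cast a b => exact outDD_eq_of_eq μ hsymm h

lemma outDD_of_injective (hvanish : ∀ p : Fin k → Fin n, Function.Injective p → T p = 0)
    (hi : Function.Injective i) (l : Fin k) : outDD μ T l i = 0 := by
  have restrict_injective : Function.Injective (fun s : Fin k => i s.castSucc) :=
    hi.comp (Fin.castSucc_injective k)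
  have last_notMem_range : i (Fin.last k) ∉ Set.range fun s : Fin k => i s.castSucc := by
    rintro ⟨s, hs⟩
    exact Fin.castSucc_ne_last s (hi hs)
  have update_injective :=
    injective_update_of_notMem_range restrict_injective last_notMem_range l
  rw [outDD, hvanish _ restrict_injective, hvanish _ update_injective, sub_zero, zero_div, ite_self]

lemma positionWeights_outDD_of_injective
    (hvanish : ∀ p : Fin k → Fin n, Function.Injective p → T p = 0)
    (hi : Function.Injective i) : positionWeights (outDD μ T) i = 0 := by
  ext l
  cases l using Fin.lastCases <;> simp [positionWeights, outDD_of_injective μ hvanish hi]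

end OutDD

/-- Fix `μ`. If `T` is a symmetric `k`-tensor vanishing on all
multi-indices with pairwise distinct entries, then
`∑_{σ ∈ P^k} ∑_{l=1}^{k} sign(σ_{(l)}) Diag^{σ_{(l)}} T^{(l)}_out = 0`. -/
theorem statement18 {n k : ℕ} (μ : Fin n → ℝ) (T : Tensor k n)
    (hsymm : ∀ (π : Equiv.Perm (Fin k)) (p : Fin k → Fin n), T (p ∘ ⇑π) = T p)
    (hvanish : ∀ p : Fin k → Fin n, Function.Injective p → T p = 0) :
    ∑ σ : Equiv.Perm (Fin k), ∑ l : Fin k,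
        ((Equiv.Perm.sign (permIns σ l.castSucc) : ℤ)
          • diagPerm (permIns σ l.castSucc) (outDD μ T l))
      = (0 : Tensor2 (k+1) n) := by
  funext i j
  rw [sum_sign_smul_diagPerm_permIns_apply]
  by_cases hi : Function.Injective i
  · rw [positionWeights_outDD_of_injective μ hvanish hi, det_weightedCoincidence_zero]
    rfl
  · obtain ⟨a, b, hab, hne⟩ := Function.not_injective_iff.mp hi
    exact det_weightedCoincidence_of_eq hne hab (positionWeights_outDD_eq_of_eq μ hsymm hab) j

end
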